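/- arXiv:2108.02683 — 2 statements merged into one kernel-verified Lean document; each statement's English description precedes it below -/
import Mathlib

section
/- Fix Λ ∈ ℝ and real parameters γ, χ', and let r_C = −(γ + χ'/2) K_2∧K_3 + (γ − χ'/2) J_2∧J_3 − γ K_1∧J_1 + (χ'/2)(K_2∧J_2 + K_3∧J_3) ∈ g_Λ ∧ g_Λ (the Type C classical r-matrix of the Lorentz algebra). Then the Schouten bracket [[r_C,r_C]] is invariant under the adjoint action of all of g_Λ (i.e. X·[[r_C,r_C]] = 0 for every X ∈ g_Λ) if and only if γ = 0; in that case r_C = −(χ'/2)(K_2∧K_3 − K_2∧J_2 − K_3∧J_3 + J_2∧J_3) and [[r_C,r_C]] = 0. -/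
namespace NCST

noncomputable section

/-- The underlying 10-dimensional vector space of `g_Λ`, with basis indices
`0,1,2,3 ↦ P_0,P_1,P_2,P_3`, `4,5,6 ↦ K_1,K_2,K_3`, `7,8,9 ↦ J_1,J_2,J_3`. -/
abbrev V : Type := Fin 10 → ℝ

/-- The `i`-th basis vector. -/
def e (i : Fin 10) : V := Pi.single i 1

/-- The Levi-Civita symbol on `{1,2,3}` (indices shifted to `Fin 3`), `ε_{123} = 1`. -/
def eps (a b c : Fin 3) : ℝ :=
  if (a = 0 ∧ b = 1 ∧ c = 2) ∨ (a = 1 ∧ b = 2 ∧ c = 0) ∨ (a = 2 ∧ b = 0 ∧ c = 1) then 1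
  else if (a = 2 ∧ b = 1 ∧ c = 0) ∨ (a = 1 ∧ b = 0 ∧ c = 2) ∨ (a = 0 ∧ b = 2 ∧ c = 1) then -1
  else 0

/-- Translation generators `P_μ`, `μ = 0,1,2,3`. -/
def Pv (μ : Fin 4) : V := e ⟨μ.1, by have := μ.isLt; omega⟩
/-- Boost generators `K_a`, `a = 1,2,3` (index `a+1` in `Fin 3`-terms). -/
def Kv (a : Fin 3) : V := e ⟨a.1 + 4, by have := a.isLt; omega⟩
/-- Rotation generators `J_a`, `a = 1,2,3`. -/
def Jv (a : Fin 3) : V := e ⟨a.1 + 7, by have := a.isLt; omega⟩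

/-- Labels for the kinematical basis generators. -/
inductive Gen : Type
  | P : Fin 4 → Gen
  | K : Fin 3 → Gen
  | J : Fin 3 → Gen

/-- `[K_a, P_μ]`: equals `P_a` if `μ = 0` and `δ_{ab} P_0` if `μ = b ∈ {1,2,3}`. -/
def KPbra (a : Fin 3) (μ : Fin 4) : V :=
  if μ.1 = 0 then Pv ⟨a.1 + 1, by have := a.isLt; omega⟩
  else if μ.1 = a.1 + 1 then Pv 0 else 0

/-- `[J_a, P_μ]`: equals `0` if `μ = 0` and `ε_{abc} P_c` if `μ = b ∈ {1,2,3}`. -/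
def JPbra (a : Fin 3) (μ : Fin 4) : V :=
  if h : μ.1 = 0 then 0
  else ∑ c : Fin 3, eps a ⟨μ.1 - 1, by have := μ.isLt; omega⟩ c •
    Pv ⟨c.1 + 1, by have := c.isLt; omega⟩

/-- `[P_μ, P_ν]`: `[P_0,P_a] = -Λ K_a`, `[P_a,P_b] = Λ ε_{abc} J_c`. -/
def PPbra (Λ : ℝ) (μ ν : Fin 4) : V :=
  if _hμ : μ.1 = 0 then
    (if _hν : ν.1 = 0 then 0 else (-Λ) • Kv ⟨ν.1 - 1, by have := ν.isLt; omega⟩)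
  else if _hν : ν.1 = 0 then Λ • Kv ⟨μ.1 - 1, by have := μ.isLt; omega⟩
  else Λ • ∑ c : Fin 3, eps ⟨μ.1 - 1, by have := μ.isLt; omega⟩
    ⟨ν.1 - 1, by have := ν.isLt; omega⟩ c • Jv c

/-- `[K_a, K_b] = -ε_{abc} J_c`. -/
def KKbra (a b : Fin 3) : V := -∑ c : Fin 3, eps a b c • Jv c
/-- `[J_a, K_b] = ε_{abc} K_c`. -/
def JKbra (a b : Fin 3) : V := ∑ c : Fin 3, eps a b c • Kv c
/-- `[J_a, J_b] = ε_{abc} J_c`. -/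
def JJbra (a b : Fin 3) : V := ∑ c : Fin 3, eps a b c • Jv c

/-- The bracket of two basis generators of `g_Λ`, as in eq. (1) of the paper. -/
def genBra (Λ : ℝ) : Gen → Gen → V
  | .P μ, .P ν => PPbra Λ μ ν
  | .P μ, .K a => -KPbra a μ
  | .P μ, .J a => -JPbra a μ
  | .K a, .P μ => KPbra a μ
  | .K a, .K b => KKbra a b
  | .K a, .J b => -JKbra b a
  | .J a, .P μ => JPbra a μ
  | .J a, .K b => JKbra a b
  | .J a, .J b => JJbra a b

/-- Decoding of a `Fin 10` index into the corresponding generator label. -/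
def idxGen (i : Fin 10) : Gen :=
  if h : i.1 < 4 then .P ⟨i.1, h⟩
  else if h2 : i.1 < 7 then .K ⟨i.1 - 4, by omega⟩
  else .J ⟨i.1 - 7, by have := i.isLt; omega⟩

/-- The bracket of `g_Λ`, extended bilinearly from the structure constants. -/
def bra (Λ : ℝ) (x y : V) : V :=
  ∑ i : Fin 10, ∑ j : Fin 10, (x i * y j) • genBra Λ (idxGen i) (idxGen j)

/-- Coefficients of elements of `g_Λ ⊗ g_Λ` in the basis `e_i ⊗ e_j`. -/
abbrev T2 : Type := Fin 10 → Fin 10 → ℝ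
/-- Coefficients of elements of `g_Λ ⊗ g_Λ ⊗ g_Λ`. -/
abbrev T3 : Type := Fin 10 → Fin 10 → Fin 10 → ℝ

/-- The diagonal adjoint action `X·(a⊗b) = [X,a]⊗b + a⊗[X,b]` on `g_Λ ⊗ g_Λ`,
in coordinates; `adT Λ X r` is the cocommutator `δ_r(X)`. -/
def adT (Λ : ℝ) (X : V) (r : T2) : T2 :=
  fun k l => (∑ i : Fin 10, r i l * bra Λ X (e i) k) +
    ∑ j : Fin 10, r k j * bra Λ X (e j) l

/-- `x ∧ y := x ⊗ y - y ⊗ x`, in coordinates. -/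
def wedge (x y : V) : T2 := fun i j => x i * y j - x j * y i

/-- The wedge `e_i ∧ e_j` of two basis vectors. -/
def wEl (i j : Fin 10) : T2 := wedge (e i) (e j)

/-- The Schouten bracket `[[r,r]]` of `r ∈ g_Λ ⊗ g_Λ`, in coordinates:
`[[r,r]] = [r_{12},r_{13}] + [r_{12},r_{23}] + [r_{13},r_{23}]`, i.e. for
`r = Σ aᵢ⊗bᵢ`, `[[r,r]] = Σᵢⱼ ([aᵢ,aⱼ]⊗bᵢ⊗bⱼ + aᵢ⊗[bᵢ,aⱼ]⊗bⱼ + aᵢ⊗aⱼ⊗[bᵢ,bⱼ])`. -/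
def schouten (Λ : ℝ) (r : T2) : T3 :=
  fun p q s =>
    ∑ i : Fin 10, ∑ j : Fin 10, ∑ k : Fin 10, ∑ l : Fin 10, r i j * r k l *
      (bra Λ (e i) (e k) p * (if j = q then (1:ℝ) else 0) * (if l = s then (1:ℝ) else 0)
      + (if i = p then (1:ℝ) else 0) * bra Λ (e j) (e k) q * (if l = s then (1:ℝ) else 0)
      + (if i = p then (1:ℝ) else 0) * (if k = q then (1:ℝ) else 0) * bra Λ (e j) (e l) s)

/-- The diagonal adjoint action of `X ∈ g_Λ` on `g_Λ ⊗ g_Λ ⊗ g_Λ`, in coordinates. -/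
def adT3 (Λ : ℝ) (X : V) (T : T3) : T3 :=
  fun p q s => (∑ i : Fin 10, T i q s * bra Λ X (e i) p)
    + (∑ j : Fin 10, T p j s * bra Λ X (e j) q)
    + ∑ k : Fin 10, T p q k * bra Λ X (e k) s

/-- The Type C classical `r`-matrix of the Lorentz algebra:
`r_C = −(γ + χ'/2) K_2∧K_3 + (γ − χ'/2) J_2∧J_3 − γ K_1∧J_1 + (χ'/2)(K_2∧J_2 + K_3∧J_3)`. -/
def rC (γ χ : ℝ) : T2 :=
  (-(γ + χ / 2)) • wEl 5 6 + (γ - χ / 2) • wEl 8 9 + (-γ) • wEl 4 7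
    + (χ / 2) • (wEl 5 8 + wEl 6 9)

theorem bra_apply (Λ : ℝ) (x y : V) (p : Fin 10) :
    bra Λ x y p = ∑ i, ∑ j, x i * y j * genBra Λ (idxGen i) (idxGen j) p := by
  simp [bra, Finset.sum_apply]

theorem bra_e_e (Λ : ℝ) (i j : Fin 10) :
    bra Λ (e i) (e j) = genBra Λ (idxGen i) (idxGen j) := by
  simp [bra, e, Pi.single_apply]

theorem bra_add_left (Λ : ℝ) (x x' y : V) : bra Λ (x + x') y = bra Λ x y + bra Λ x' y := by
  simp [bra, add_mul, add_smul, Finset.sum_add_distrib]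

theorem bra_add_right (Λ : ℝ) (x y y' : V) : bra Λ x (y + y') = bra Λ x y + bra Λ x y' := by
  simp [bra, mul_add, add_smul, Finset.sum_add_distrib]

theorem bra_smul_left (Λ c : ℝ) (x y : V) : bra Λ (c • x) y = c • bra Λ x y := by
  simp [bra, Finset.smul_sum, smul_smul, mul_assoc]

theorem bra_smul_right (Λ c : ℝ) (x y : V) : bra Λ x (c • y) = c • bra Λ x y := by
  simp [bra, Finset.smul_sum, smul_smul, mul_left_comm]

theorem bra_neg_left (Λ : ℝ) (x y : V) : bra Λ (-x) y = -bra Λ x y := by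
  simp [bra]

theorem bra_neg_right (Λ : ℝ) (x y : V) : bra Λ x (-y) = -bra Λ x y := by
  simp [bra]

theorem bra_zero_left (Λ : ℝ) (y : V) : bra Λ 0 y = 0 := by
  simp [bra]

theorem bra_zero_right (Λ : ℝ) (x : V) : bra Λ x 0 = 0 := by
  simp [bra]

/-- The Schouten bracket in terms of brackets of rows and columns of the coefficient matrix. -/
theorem schouten_apply (Λ : ℝ) (r : T2) (p q s : Fin 10) :
    schouten Λ r p q s = bra Λ (fun i => r i q) (fun k => r k s) p
      + bra Λ (r p) (fun k => r k s) q + bra Λ (r p) (r q) s := by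
  simp only [schouten, mul_add, Finset.sum_add_distrib]
  congr 1
  · congr 1
    · rw [bra_apply]
      refine Finset.sum_congr rfl fun i _ => ?_
      rw [Finset.sum_eq_single q (by intro j _ hj; simp [hj]) (by simp)]
      simp [bra_e_e, mul_assoc]
    · rw [bra_apply]
      rw [Finset.sum_eq_single p (by intro j _ hj; simp [hj]) (by simp)]
      simp [bra_e_e, mul_assoc]
  · rw [bra_apply]
    rw [Finset.sum_eq_single p (by intro j _ hj; simp [hj]) (by simp)]
    refine Finset.sum_congr rfl fun i _ => ?_
    rw [Finset.sum_eq_single q (by intro j _ hj; simp [hj]) (by simp)]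
    simp [bra_e_e, mul_assoc]

/-- The Schouten bracket of `c • (a ∧ b)` vanishes when `a` and `b` span an abelian subalgebra. -/
theorem schouten_smul_wedge_eq_zero (Λ c : ℝ) (a b : V) (haa : bra Λ a a = 0)
    (hab : bra Λ a b = 0) (hba : bra Λ b a = 0) (hbb : bra Λ b b = 0) :
    schouten Λ (c • wedge a b) = 0 := by
  have hcol : ∀ q, (fun i => (c • wedge a b) i q) = (c * b q) • a + (-(c * a q)) • b := by
    intro q; ext i; simp [wedge]; ring
  have hrow : ∀ q, (c • wedge a b) q = (-(c * b q)) • a + (c * a q) • b := by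
    intro q; ext i; simp [wedge]; ring
  ext p q s
  rw [schouten_apply, hcol, hcol, hrow, hrow]
  simp [bra_add_left, bra_add_right, bra_smul_left, bra_smul_right, bra_neg_left,
    bra_neg_right, haa, hab, hba, hbb]

theorem rC_zero (χ : ℝ) :
    rC 0 χ = (-(χ / 2)) • (wEl 5 6 - wEl 5 8 - wEl 6 9 + wEl 8 9) := by
  ext i j; simp [rC]; ring

theorem rC_zero_eq_wedge (χ : ℝ) :
    rC 0 χ = (-(χ / 2)) • wedge (e 5 + e 9) (e 6 - e 8) := by
  ext i j; simp [rC, wEl, wedge]; ring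

theorem schouten_rC_zero (Λ χ : ℝ) : schouten Λ (rC 0 χ) = 0 := by
  rw [rC_zero_eq_wedge]
  apply schouten_smul_wedge_eq_zero <;>
    simp [sub_eq_add_neg, bra_add_left, bra_add_right, bra_neg_left, bra_neg_right, bra_e_e,
    idxGen, genBra, KKbra, JKbra, JJbra, eps]

theorem schouten_rC_four_eight_six (Λ γ χ : ℝ) : schouten Λ (rC γ χ) 4 8 6 = -γ ^ 2 := by
  have row4 : rC γ χ 4 = (-γ) • e 7 := by
    ext i; simp [rC, wEl, wedge, e, Pi.single_apply]; split_ifs <;> simp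
  have row8 : rC γ χ 8 = (γ - χ / 2) • e 9 + (-(χ / 2)) • e 5 := by
    ext i; simp [rC, wEl, wedge, e, Pi.single_apply]
  have col8 : (fun i => rC γ χ i 8) = (-(γ - χ / 2)) • e 9 + (χ / 2) • e 5 := by
    ext i; simp [rC, wEl, wedge, e, Pi.single_apply]; split_ifs <;> simp
  have col6 : (fun i => rC γ χ i 6) = (-(γ + χ / 2)) • e 5 + (-(χ / 2)) • e 9 := by
    ext i; simp [rC, wEl, wedge, e, Pi.single_apply]
  rw [schouten_apply, row4, row8, col8, col6]
  simp [bra_add_left, bra_add_right, bra_smul_left, bra_smul_right, bra_neg_left,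
    bra_neg_right, bra_e_e, idxGen, genBra, KKbra, JKbra, JJbra, eps, Jv, Kv]
  simp [e]
  ring

theorem schouten_rC_one_eight_three (Λ γ χ : ℝ) : schouten Λ (rC γ χ) 1 8 3 = 0 := by
  have row1 : rC γ χ 1 = 0 := by
    ext i; simp [rC, wEl, wedge, e, Pi.single_apply]
  have col3 : (fun i => rC γ χ i 3) = 0 := by
    ext i; simp [rC, wEl, wedge, e, Pi.single_apply]
  rw [schouten_apply, row1, col3]
  simp [bra_zero_left, bra_zero_right]

theorem adT3_P0_one_eight_six (Λ : ℝ) (T : T3) :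
    adT3 Λ (e 0) T 1 8 6 = -T 4 8 6 - Λ * T 1 8 3 := by
  simp [adT3, bra_e_e, idxGen, genBra, PPbra, KPbra, JPbra, eps, Fin.sum_univ_succ, Pv, Kv]
  simp [e]
  ring

/-- `[[r_C,r_C]]` is `g_Λ`-invariant iff `γ = 0`; in that case
`r_C = −(χ'/2)(K_2∧K_3 − K_2∧J_2 − K_3∧J_3 + J_2∧J_3)` and `[[r_C,r_C]] = 0`. -/
theorem rC_schouten_invariant_iff (Λ γ χ : ℝ) :
    ((∀ X : V, adT3 Λ X (schouten Λ (rC γ χ)) = 0) ↔ γ = 0) ∧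
    (γ = 0 →
      rC γ χ = (-(χ / 2)) • (wEl 5 6 - wEl 5 8 - wEl 6 9 + wEl 8 9) ∧
      schouten Λ (rC γ χ) = 0) := by
  refine ⟨⟨fun h => ?_, ?_⟩, ?_⟩
  · have h0 := congrFun (congrFun (congrFun (h (e 0)) 1) 8) 6
    rw [adT3_P0_one_eight_six, schouten_rC_four_eight_six, schouten_rC_one_eight_three] at h0
    simpa using h0
  · rintro rfl X
    ext p q s
    simp [schouten_rC_zero, adT3]
  · rintro rfl
    exact ⟨rC_zero χ, schouten_rC_zero Λ χ⟩

end
end NCST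
end

section
/- Let Λ ∈ ℝ and a_2, b_2, c_2, c_1 ∈ ℝ, and let r = a_2 J_3∧K_1 + b_2 J_3∧K_2 + c_2 K_1∧K_2 + c_1 (J_3∧P_0 − P_1∧K_2 + P_2∧K_1) ∈ g_Λ^{2+1} ∧ g_Λ^{2+1}. Then the Schouten bracket [[r,r]] is invariant under the adjoint action of all of g_Λ^{2+1} (i.e. X·[[r,r]] = 0 for every X ∈ g_Λ^{2+1}) if and only if c_2² − a_2² − b_2² − 4Λ c_1² = 0. -/
namespace NCST3

noncomputable section

/-- The underlying 6-dimensional vector space of `g_Λ^{2+1}`, with basis indices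
`0,1,2 ↦ P_0,P_1,P_2`, `3 ↦ K_1`, `4 ↦ K_2`, `5 ↦ J_3`. -/
abbrev V6 : Type := Fin 6 → ℝ

/-- The `i`-th basis vector. -/
def e6 (i : Fin 6) : V6 := Pi.single i 1

/-- The bracket `[X_i, X_j]` of two basis generators of `g_Λ^{2+1}`:
`[J_3,P_1]=P_2`, `[J_3,P_2]=−P_1`, `[J_3,K_1]=K_2`, `[J_3,K_2]=−K_1`, `[J_3,P_0]=0`,
`[K_a,P_0]=P_a`, `[K_a,P_b]=δ_{ab}P_0`, `[K_1,K_2]=−J_3`,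
`[P_0,P_a]=−Λ K_a`, `[P_1,P_2]=Λ J_3`. -/
def braB6 (Λ : ℝ) : Fin 6 → Fin 6 → V6 :=
  ![![0, (-Λ) • e6 3, (-Λ) • e6 4, -e6 1, -e6 2, 0],
    ![Λ • e6 3, 0, Λ • e6 5, -e6 0, 0, -e6 2],
    ![Λ • e6 4, (-Λ) • e6 5, 0, 0, -e6 0, e6 1],
    ![e6 1, e6 0, 0, 0, -e6 5, -e6 4],
    ![e6 2, 0, e6 0, e6 5, 0, e6 3],
    ![0, e6 2, -e6 1, e6 4, -e6 3, 0]]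

/-- The bracket of `g_Λ^{2+1}`, extended bilinearly from the structure constants. -/
def bra6 (Λ : ℝ) (x y : V6) : V6 :=
  ∑ i : Fin 6, ∑ j : Fin 6, (x i * y j) • braB6 Λ i j

/-- Coefficients of elements of `g_Λ^{2+1} ⊗ g_Λ^{2+1}`. -/
abbrev T2₆ : Type := Fin 6 → Fin 6 → ℝ
/-- Coefficients of elements of the triple tensor power of `g_Λ^{2+1}`. -/
abbrev T3₆ : Type := Fin 6 → Fin 6 → Fin 6 → ℝ

/-- The diagonal adjoint action `X·(a⊗b) = [X,a]⊗b + a⊗[X,b]`, in coordinates. -/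
def adT6 (Λ : ℝ) (X : V6) (r : T2₆) : T2₆ :=
  fun k l => (∑ i : Fin 6, r i l * bra6 Λ X (e6 i) k) +
    ∑ j : Fin 6, r k j * bra6 Λ X (e6 j) l

/-- `x ∧ y := x ⊗ y - y ⊗ x`, in coordinates. -/
def wedge6 (x y : V6) : T2₆ := fun i j => x i * y j - x j * y i

/-- The wedge `e_i ∧ e_j` of two basis vectors. -/
def wEl6 (i j : Fin 6) : T2₆ := wedge6 (e6 i) (e6 j)

/-- The Schouten bracket `[[r,r]]`, in coordinates: for `r = Σ aᵢ⊗bᵢ`,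
`[[r,r]] = Σᵢⱼ ([aᵢ,aⱼ]⊗bᵢ⊗bⱼ + aᵢ⊗[bᵢ,aⱼ]⊗bⱼ + aᵢ⊗aⱼ⊗[bᵢ,bⱼ])`. -/
def schouten6 (Λ : ℝ) (r : T2₆) : T3₆ :=
  fun p q s =>
    ∑ i : Fin 6, ∑ j : Fin 6, ∑ k : Fin 6, ∑ l : Fin 6, r i j * r k l *
      (bra6 Λ (e6 i) (e6 k) p * (if j = q then (1:ℝ) else 0) * (if l = s then (1:ℝ) else 0)
      + (if i = p then (1:ℝ) else 0) * bra6 Λ (e6 j) (e6 k) q * (if l = s then (1:ℝ) else 0)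
      + (if i = p then (1:ℝ) else 0) * (if k = q then (1:ℝ) else 0) * bra6 Λ (e6 j) (e6 l) s)

/-- The diagonal adjoint action of `X` on the triple tensor power, in coordinates. -/
def adT36 (Λ : ℝ) (X : V6) (T : T3₆) : T3₆ :=
  fun p q s => (∑ i : Fin 6, T i q s * bra6 Λ X (e6 i) p)
    + (∑ j : Fin 6, T p j s * bra6 Λ X (e6 j) q)
    + ∑ k : Fin 6, T p q k * bra6 Λ X (e6 k) s

/-- The special (2+1)D element `J_3∧P_0 − P_1∧K_2 + P_2∧K_1`
(`J_3 = e_5`, `P_0 = e_0`, `P_1 = e_1`, `P_2 = e_2`, `K_1 = e_3`, `K_2 = e_4`). -/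
def rSpec : T2₆ := wEl6 5 0 - wEl6 1 4 + wEl6 2 3

theorem bra6_apply (Λ : ℝ) (x y : V6) :
    bra6 Λ x y =
      ![x 3 * y 1 - x 1 * y 3 + (x 4 * y 2 - x 2 * y 4),
        x 3 * y 0 - x 0 * y 3 - (x 5 * y 2 - x 2 * y 5),
        x 4 * y 0 - x 0 * y 4 + (x 5 * y 1 - x 1 * y 5),
        -Λ * (x 0 * y 1 - x 1 * y 0) - (x 5 * y 4 - x 4 * y 5),
        -Λ * (x 0 * y 2 - x 2 * y 0) + (x 5 * y 3 - x 3 * y 5),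
        Λ * (x 1 * y 2 - x 2 * y 1) - (x 3 * y 4 - x 4 * y 3)] := by
  funext p
  fin_cases p <;> simp [bra6, braB6, e6, Fin.sum_univ_six] <;> ring

theorem bra6_eq_sum (Λ : ℝ) (x y : V6) (p : Fin 6) :
    bra6 Λ x y p = ∑ i, ∑ j, x i * y j * bra6 Λ (e6 i) (e6 j) p := by
  have h (i j : Fin 6) : bra6 Λ (e6 i) (e6 j) = braB6 Λ i j := by
    simp [bra6, e6, Pi.single_apply]
  simp only [h]
  simp [bra6, Finset.sum_apply]

/-- For an antisymmetric tensor, the Schouten bracket is the alternating sum of the brackets of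
the rows of the coefficient matrix. -/
theorem schouten6_eq_bra6_rows (Λ : ℝ) {r : T2₆} (hr : ∀ i j, r i j = -r j i)
    (p q s : Fin 6) :
    schouten6 Λ r p q s =
      bra6 Λ (r q) (r s) p - bra6 Λ (r p) (r s) q + bra6 Λ (r p) (r q) s := by
  have h₁ : bra6 Λ (r q) (r s) p =
      ∑ i, ∑ k, r i q * r k s * bra6 Λ (e6 i) (e6 k) p := by
    simp_rw [bra6_eq_sum Λ (r q), hr q, hr s, neg_mul_neg]
  have h₂ : -bra6 Λ (r p) (r s) q =
      ∑ i, ∑ k, r p i * r k s * bra6 Λ (e6 i) (e6 k) q := by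
    simp_rw [bra6_eq_sum Λ (r p), hr s, mul_neg, neg_mul, Finset.sum_neg_distrib, neg_neg]
  rw [sub_eq_add_neg, h₁, h₂, bra6_eq_sum Λ (r p)]
  simp only [schouten6, mul_add, Finset.sum_add_distrib]
  refine congrArg₂ _ (congrArg₂ _ ?_ ?_) ?_
  · refine Finset.sum_congr rfl fun i _ => ?_
    rw [Finset.sum_comm]
    refine Finset.sum_congr rfl fun k _ => ?_
    simp
  · rw [Finset.sum_eq_single p (fun i _ hi => by simp [hi]) (by simp)]
    simp
  · rw [Finset.sum_eq_single p (fun i _ hi => by simp [hi]) (by simp)]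
    refine Finset.sum_congr rfl fun i _ => ?_
    rw [Finset.sum_eq_single q (fun k _ hk => by simp [hk]) (by simp)]
    simp

/-- `e_i ∧ e_j ∧ e_k`, in coordinates. -/
def wedgeBasis3 (i j k : Fin 6) : T3₆ := fun p q s =>
  e6 i p * wEl6 j k q s + e6 j p * wEl6 k i q s + e6 k p * wEl6 i j q s

/-- `α (P_0∧P_1∧K_1 + P_0∧P_2∧K_2 + P_1∧P_2∧J_3) + κ K_1∧K_2∧J_3`. -/
def cubicElement (α κ : ℝ) : T3₆ :=
  α • (wedgeBasis3 0 1 3 + wedgeBasis3 0 2 4 + wedgeBasis3 1 2 5) + κ • wedgeBasis3 3 4 5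

set_option maxHeartbeats 4000000 in
theorem cubicElement_apply (α κ : ℝ) :
    cubicElement α κ =
      ![![0, ![0, 0, 0, α, 0, 0], ![0, 0, 0, 0, α, 0],
          ![0, -α, 0, 0, 0, 0], ![0, 0, -α, 0, 0, 0], 0],
        ![![0, 0, 0, -α, 0, 0], 0, ![0, 0, 0, 0, 0, α],
          ![α, 0, 0, 0, 0, 0], 0, ![0, 0, -α, 0, 0, 0]],
        ![![0, 0, 0, 0, -α, 0], ![0, 0, 0, 0, 0, -α], 0,
          0, ![α, 0, 0, 0, 0, 0], ![0, α, 0, 0, 0, 0]],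
        ![![0, α, 0, 0, 0, 0], ![-α, 0, 0, 0, 0, 0], 0,
          0, ![0, 0, 0, 0, 0, κ], ![0, 0, 0, 0, -κ, 0]],
        ![![0, 0, α, 0, 0, 0], 0, ![-α, 0, 0, 0, 0, 0],
          ![0, 0, 0, 0, 0, -κ], 0, ![0, 0, 0, κ, 0, 0]],
        ![0, ![0, 0, α, 0, 0, 0], ![0, -α, 0, 0, 0, 0],
          ![0, 0, 0, 0, κ, 0], ![0, 0, 0, -κ, 0, 0], 0]] := by
  funext p q s
  fin_cases p <;> fin_cases q <;> fin_cases s <;>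
    simp [cubicElement, wedgeBasis3, wEl6, wedge6, e6]

theorem r21_apply (a₂ b₂ c₂ c₁ : ℝ) :
    a₂ • wEl6 5 3 + b₂ • wEl6 5 4 + c₂ • wEl6 3 4 + c₁ • rSpec =
      ![![0, 0, 0, 0, 0, -c₁],
        ![0, 0, 0, 0, -c₁, 0],
        ![0, 0, 0, c₁, 0, 0],
        ![0, 0, -c₁, 0, c₂, -a₂],
        ![0, c₁, 0, -c₂, 0, -b₂],
        ![c₁, 0, 0, a₂, b₂, 0]] := by
  funext p q
  fin_cases p <;> fin_cases q <;> simp [rSpec, wEl6, wedge6, e6]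

set_option maxHeartbeats 4000000 in
theorem schouten6_r21 (Λ a₂ b₂ c₂ c₁ : ℝ) :
    schouten6 Λ (a₂ • wEl6 5 3 + b₂ • wEl6 5 4 + c₂ • wEl6 3 4 + c₁ • rSpec) =
      cubicElement (c₁ ^ 2) (3 * Λ * c₁ ^ 2 + a₂ ^ 2 + b₂ ^ 2 - c₂ ^ 2) := by
  rw [r21_apply, cubicElement_apply]
  funext p q s
  rw [schouten6_eq_bra6_rows]
  · fin_cases p <;> fin_cases q <;> fin_cases s <;> simp [bra6_apply] <;> ring
  · intro i j
    fin_cases i <;> fin_cases j <;> simp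

set_option maxHeartbeats 4000000 in
theorem adT36_cubicElement_eq_zero (Λ α : ℝ) (X : V6) :
    adT36 Λ X (cubicElement α (-Λ * α)) = 0 := by
  rw [cubicElement_apply]
  funext p q s
  fin_cases p <;> fin_cases q <;> fin_cases s <;>
    simp [adT36, bra6_apply, e6, Fin.sum_univ_six] <;> ring

theorem adT36_e6_zero_cubicElement (Λ α κ : ℝ) :
    adT36 Λ (e6 0) (cubicElement α κ) 1 4 5 = -(κ + Λ * α) := by
  simp [cubicElement_apply, adT36, bra6_apply, e6, Fin.sum_univ_six]
  ring

/-- For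
`r = a₂ J_3∧K_1 + b₂ J_3∧K_2 + c₂ K_1∧K_2 + c₁(J_3∧P_0 − P_1∧K_2 + P_2∧K_1)`,
the Schouten bracket `[[r,r]]` is invariant under the adjoint action of all of
`g_Λ^{2+1}` iff `c₂² − a₂² − b₂² − 4Λc₁² = 0`. -/
theorem general_r21_schouten_invariant_iff (Λ a₂ b₂ c₂ c₁ : ℝ) :
    (∀ X : V6, adT36 Λ X (schouten6 Λ
        (a₂ • wEl6 5 3 + b₂ • wEl6 5 4 + c₂ • wEl6 3 4 + c₁ • rSpec)) = 0) ↔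
      c₂ ^ 2 - a₂ ^ 2 - b₂ ^ 2 - 4 * Λ * c₁ ^ 2 = 0 := by
  rw [schouten6_r21]
  constructor
  · intro h
    have h₀ := congrFun (congrFun (congrFun (h (e6 0)) 1) 4) 5
    rw [adT36_e6_zero_cubicElement, Pi.zero_apply, Pi.zero_apply, Pi.zero_apply] at h₀
    linarith
  · intro h X
    rw [show 3 * Λ * c₁ ^ 2 + a₂ ^ 2 + b₂ ^ 2 - c₂ ^ 2 = -Λ * c₁ ^ 2 by linarith]
    exact adT36_cubicElement_eq_zero Λ (c₁ ^ 2) X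

end
end NCST3
end
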